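/- arXiv:2208.13069 — 2 statements merged into one kernel-verified Lean document; each statement's English description precedes it below -/
import Mathlib

section
/- Let G be a countable group, M ⊆ G a finite subset, V a finite-dimensional vector space over a field k, S = L(V^M, V), and s ∈ S^G. Then the linear NUCA σ_s is pre-injective if and only if σ_p is pre-injective for every p ∈ Σ(s) (i.e., σ_s is pre-injective if and only if it is stably pre-injective). -/
open scoped BigOperators

/-- The linear NUCA `σ_s : V^G → V^G` with memory `M ⊆ G` associated with the
configuration of local defining maps `s`, given in coefficient form:
`σ_s(x)(g) = ∑_{m ∈ M} s(g,m)(x(g·m))`. -/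
def nucaMap {k V G : Type*} [Field k] [AddCommGroup V] [Module k V] [Group G]
    (M : Finset G) (s : G → G → (V →ₗ[k] V)) (x : G → V) : G → V :=
  fun g => ∑ m ∈ M, s g m (x (g * m))

/-- Two configurations are asymptotic if they agree outside a finite set. -/
def Asymptotic {G A : Type*} (x y : G → A) : Prop :=
  Set.Finite {g : G | x g ≠ y g}

/-- A map `σ : V^G → V^G` is pre-injective if `σ(x) = σ(y)` implies `x = y` whenever
`x` and `y` are asymptotic. -/
def PreInjective {G V : Type*} (σ : (G → V) → (G → V)) : Prop :=
  ∀ x y : G → V, Asymptotic x y → σ x = σ y → x = y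

/-- `Σ(s)`: the closure, in the prodiscrete topology (local maps `S` discrete),
of the shift orbit `{g·s : g ∈ G}` of the configuration of local defining maps `s`,
where `(g·s)(h) = s(g⁻¹h)`. -/
def orbitClosure {G E : Type*} [Group G] (s : G → G → E) : Set (G → G → E) :=
  @closure _ (@Pi.topologicalSpace G (fun _ => G → E) (fun _ => ⊥))
    (Set.range fun g : G => fun h : G => s (g⁻¹ * h))

/-!
Pre-injectivity passes from `s` to its shifts because the dynamics is shift-equivariant. It also
passes to limits: whether two asymptotic configurations `x` and `y` have the same image is decided
by the local rules at the finitely many cells whose neighbourhood meets `{g | x g ≠ y g}`, so it is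
an open condition on `s` for the prodiscrete topology, and pre-injectivity, which asks that it fail
for all `x ≠ y`, is a closed one.
-/

open scoped Pointwise

theorem Asymptotic.comp_injective {G H A : Type*} {x y : G → A} (hxy : Asymptotic x y)
    {f : H → G} (hf : Function.Injective f) : Asymptotic (x ∘ f) (y ∘ f) :=
  Set.Finite.preimage hf.injOn hxy

/-- The non-uniform cellular automaton that applies the local rule `μ (s g)` at the cell `g`.
Local rules are indexed by a type `S` and read the whole configuration recentred at `g`; a memory
set `M` is imposed separately, as `∀ a, DependsOn (μ a) M`. -/
def nuca {G S A B : Type*} [Mul G] (μ : S → (G → A) → B) (s : G → S) (x : G → A) : G → B :=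
  fun g => μ (s g) fun m => x (g * m)

theorem nuca_comp_mul_left {G S A B : Type*} [Semigroup G] (μ : S → (G → A) → B) (s : G → S)
    (x : G → A) (g : G) :
    nuca μ (s ∘ (g * ·)) (x ∘ (g * ·)) = nuca μ s x ∘ (g * ·) := by
  funext h
  simp only [nuca, Function.comp_apply, mul_assoc]

section NUCA

variable {G S A : Type*} [Group G]

theorem PreInjective.comp_mul_left {μ : S → (G → A) → A} {s : G → S}
    (hs : PreInjective (nuca μ s)) (g : G) : PreInjective (nuca μ (s ∘ (g * ·))) := by
  intro x y hxy hσ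
  have unshift (z : G → A) : (z ∘ (g⁻¹ * ·)) ∘ (g * ·) = z := by
    funext h
    simp only [Function.comp_apply, inv_mul_cancel_left]
  have hσ' : nuca μ s (x ∘ (g⁻¹ * ·)) = nuca μ s (y ∘ (g⁻¹ * ·)) := by
    apply (mul_left_surjective g).injective_comp_right
    simpa only [← nuca_comp_mul_left, unshift] using hσ
  have hshift := hs _ _ (hxy.comp_injective (mul_right_injective g⁻¹)) hσ'
  rw [← unshift x, hshift, unshift]

theorem nuca_apply_eq_of_notMem {B : Type*} {μ : S → (G → A) → B} {M : Set G}
    (hμ : ∀ a, DependsOn (μ a) M) (s : G → S) {x y : G → A} {g : G}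
    (hg : g ∉ {h | x h ≠ y h} * M⁻¹) : nuca μ s x g = nuca μ s y g := by
  refine hμ (s g) fun m hm => ?_
  by_contra hne
  exact hg ⟨g * m, hne, m⁻¹, Set.inv_mem_inv.2 hm, mul_inv_cancel_right g m⟩

variable [TopologicalSpace S] [DiscreteTopology S]

theorem isOpen_setOfPred_nuca_eq {B : Type*} {μ : S → (G → A) → B} {M : Set G} (hM : M.Finite)
    (hμ : ∀ a, DependsOn (μ a) M) {x y : G → A} (hxy : Asymptotic x y) :
    IsOpen {s : G → S | nuca μ s x = nuca μ s y} := by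
  have hpi : {s : G → S | nuca μ s x = nuca μ s y} =
      ({h | x h ≠ y h} * M⁻¹).pi fun g =>
        {a | μ a (fun m => x (g * m)) = μ a fun m => y (g * m)} := by
    ext s
    refine ⟨fun h g _ => congrFun h g, fun h => funext fun g => ?_⟩
    by_cases hg : g ∈ {h | x h ≠ y h} * M⁻¹
    · exact h g hg
    · exact nuca_apply_eq_of_notMem hμ s hg
  rw [hpi]
  exact isOpen_set_pi (Set.Finite.mul hxy hM.inv) fun _ _ => isOpen_discrete _

theorem isClosed_setOfPred_preInjective_nuca {μ : S → (G → A) → A} {M : Set G} (hM : M.Finite)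
    (hμ : ∀ a, DependsOn (μ a) M) : IsClosed {s : G → S | PreInjective (nuca μ s)} := by
  simp only [PreInjective, Set.ofPred_forall]
  exact isClosed_iInter fun x => isClosed_iInter fun y => isClosed_iInter fun hxy =>
    isClosed_imp (isOpen_setOfPred_nuca_eq hM hμ hxy) isClosed_const

theorem stmt2_general {μ : S → (G → A) → A} {M : Set G} (hM : M.Finite)
    (hμ : ∀ a, DependsOn (μ a) M) (s : G → S) :
    PreInjective (nuca μ s) ↔
      ∀ p ∈ closure (Set.range fun g h : G => s (g⁻¹ * h)), PreInjective (nuca μ p) := by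
  refine ⟨fun hs => ?_, fun H => H s (subset_closure ⟨1, ?_⟩)⟩
  · refine closure_minimal ?_ (isClosed_setOfPred_preInjective_nuca hM hμ)
    rintro _ ⟨g, rfl⟩
    exact hs.comp_mul_left g⁻¹
  · simp only [inv_one, one_mul]

end NUCA

/-- The linear local rule with coefficients `c` on the memory `M`. The linear NUCA `nucaMap M s` is
`nuca (linearLocalRule M) s`, definitionally. -/
def linearLocalRule {k V G : Type*} [Semiring k] [AddCommMonoid V] [Module k V] (M : Finset G)
    (c : G → V →ₗ[k] V) (w : G → V) : V :=
  ∑ m ∈ M, c m (w m)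

theorem dependsOn_linearLocalRule {k V G : Type*} [Semiring k] [AddCommMonoid V] [Module k V]
    (M : Finset G) (c : G → V →ₗ[k] V) : DependsOn (linearLocalRule M c) (M : Set G) :=
  fun _ _ h => Finset.sum_congr rfl fun m hm => congrArg (c m) (h m hm)

/-- A linear NUCA with finite memory over a finite-dimensional vector space alphabet
is pre-injective if and only if it is stably pre-injective. -/
theorem stmt2 {k V G : Type*} [Field k] [AddCommGroup V] [Module k V]
    [FiniteDimensional k V] [Group G] [Countable G]
    (M : Finset G) (s : G → G → (V →ₗ[k] V)) (hs : ∀ g, ∀ m ∉ M, s g m = 0) :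
    PreInjective (nucaMap M s) ↔
      ∀ p ∈ orbitClosure s, PreInjective (nucaMap M p) :=
  @stmt2_general _ _ _ _ ⊥ (discreteTopology_bot _) _ _ M.finite_toSet
    (dependsOn_linearLocalRule M) s
end

section
/- Let M be a finite subset of a countable group G, let V be a finite-dimensional vector space over a finite field (so V is a finite set), let S = L(V^M, V), and let s ∈ S^G be asymptotic to a constant configuration (i.e., there is s₀ ∈ S with s(g) = s₀ for all but finitely many g ∈ G). Then σ_s is invertible in each of the following cases: (i) G is amenable (for every finite K ⊆ G and every ε > 0 there is a nonempty finite F ⊆ G with |kF △ F| ≤ ε·|F| for all k ∈ K) and σ_s is post-surjective; (ii) G is residually finite (for every g ∈ G with g ≠ 1_G there exists a finite-index normal subgroup N ⊴ G with g ∉ N) and σ_s is stably post-surjective. -/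
open scoped BigOperators Pointwise

/-- A map `σ : V^G → V^G` is post-surjective if for all `x, y` with `y` asymptotic to
`σ(x)` there is `z` asymptotic to `x` with `σ(z) = y`. -/
def PostSurjective {G V : Type*} (σ : (G → V) → (G → V)) : Prop :=
  ∀ x y : G → V, Asymptotic y (σ x) → ∃ z : G → V, Asymptotic z x ∧ σ z = y

/-- The dual configuration `s*` of local defining maps, in coefficient form:
`s*(g,m) = (s(g·m, m⁻¹))ᵀ`, the transpose (dual map) of `s(g·m, m⁻¹)`. -/
def dualCoeff {k V G : Type*} [Field k] [AddCommGroup V] [Module k V] [Group G]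
    (s : G → G → (V →ₗ[k] V)) :
    G → G → (Module.Dual k V →ₗ[k] Module.Dual k V) :=
  fun g m => (s (g * m) m⁻¹).dualMap

open scoped symmDiff

/-- A NUCA `σ` over `W^G` is invertible if there is a linear NUCA with finite memory
which is a two-sided inverse of `σ`. -/
def IsInvertibleNuca (k : Type*) [Field k] {W G : Type*} [AddCommGroup W]
    [Module k W] [Group G] (σ : (G → W) → (G → W)) : Prop :=
  ∃ (N : Finset G) (t : G → G → (W →ₗ[k] W)),
    (∀ x, nucaMap N t (σ x) = x) ∧ (∀ x, σ (nucaMap N t x) = x)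

/-!
On finitely supported configurations `σ_s` and `σ_c` (with `c` the constant value of `s` outside a
finite set) are linear maps differing by a map of finite rank, so surjectivity of `σ_s` makes the
cokernel of `σ_c` finite dimensional. The map `σ_c` commutes with shifts, and translates of a
nonzero kernel element span a space whose dimension is at least proportional to the number of
translates. Over the sets of a Følner sequence, respectively over large finite quotients of `G`,
this is incompatible with a finite-dimensional cokernel, so `σ_c` is injective and an index count
makes both maps bijective. Away from the sites where `s` differs from `c`, the inverse of `σ_s` is
that of `σ_c`, which is shift equivariant and so has finite memory; the finitely many remaining
sites only enlarge the memory set. For finite `G`, a surjective `σ_s` is bijective outright.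
-/

open Function
open Module (finrank)

section LinearAlgebra

variable {K W W' α β : Type*} [DivisionRing K] [AddCommGroup W] [Module K W]
  [AddCommGroup W'] [Module K W']

theorem surjective_of_injective_of_hasFiniteRange_id_sub {g : W →ₗ[K] W} (hg : Injective g)
    (hfin : (LinearMap.id - g).HasFiniteRange) : Surjective g := by
  have : FiniteDimensional K (LinearMap.id - g).range := Module.Finite.of_fg hfin
  have hmaps : ∀ y ∈ (LinearMap.id - g).range, g y ∈ (LinearMap.id - g).range :=
    fun y hy => by simpa using sub_mem hy (LinearMap.mem_range_self (LinearMap.id - g) y)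
  have hsurj : Surjective (g.restrict hmaps) :=
    LinearMap.injective_iff_surjective.1 fun x y hxy =>
      Subtype.ext (hg (congrArg Subtype.val hxy))
  intro x
  obtain ⟨y, hy⟩ := hsurj ⟨x - g x, x, rfl⟩
  have hy : g y.1 = x - g x := congrArg Subtype.val hy
  exact ⟨x + y, by rw [map_add, hy, add_sub_cancel]⟩

theorem bijective_and_bijective_of_hasFiniteRange_sub {f g : W →ₗ[K] W'} (hf : Surjective f)
    (hg : Injective g) (hfg : (f - g).HasFiniteRange) : Bijective f ∧ Bijective g := by
  obtain ⟨r, hr⟩ := f.exists_rightInverse_of_surjective (LinearMap.range_eq_top.2 hf)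
  have hfr : RightInverse r f := LinearMap.congr_fun hr
  have hgr : Surjective (g ∘ r) := by
    refine surjective_of_injective_of_hasFiniteRange_id_sub (g := g ∘ₗ r)
      (hg.comp hfr.injective) ?_
    rw [← hr, ← LinearMap.sub_comp]
    exact hfg.comp_right r
  have hr_surj : Surjective r := hgr.of_comp_left hg
  exact ⟨⟨(hfr.leftInverse_of_surjective hr_surj).injective, hf⟩, hg, hgr.of_comp⟩

theorem finite_quotient_range_of_hasFiniteRange_sub {f g : W →ₗ[K] W'} (hf : Surjective f)
    (hfg : (f - g).HasFiniteRange) : FiniteDimensional K (W' ⧸ g.range) := by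
  have hmk : g.range.mkQ ∘ₗ (f - g) = g.range.mkQ ∘ₗ f := by
    rw [LinearMap.comp_sub, LinearMap.range_mkQ_comp, sub_zero]
  have hrange := hfg.comp_left g.range.mkQ
  have hsurj : Surjective (g.range.mkQ ∘ₗ f) := g.range.mkQ_surjective.comp hf
  rw [hmk, LinearMap.HasFiniteRange, LinearMap.range_eq_top.2 hsurj] at hrange
  exact ⟨hrange⟩

theorem exists_fg_map_eq_of_le_range {f : W →ₗ[K] W'} {U : Submodule K W'} (hU : U.FG)
    (h : U ≤ f.range) : ∃ P : Submodule K W, P.FG ∧ P.map f = U := by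
  classical
  obtain ⟨T, rfl⟩ := hU
  have hT : (T : Set W') ⊆ f '' Set.univ := by
    rw [Set.image_univ]
    exact Submodule.subset_span.trans h
  obtain ⟨T', -, rfl⟩ := Finset.subset_set_image_iff.1 hT
  exact ⟨Submodule.span K T', ⟨T', rfl⟩, by rw [Submodule.map_span, Finset.coe_image]⟩

theorem finrank_map_add_finrank_ker_inf (f : W →ₗ[K] W') (U : Submodule K W)
    [FiniteDimensional K U] :
    finrank K (U.map f) + finrank K (f.ker ⊓ U : Submodule K W) = finrank K U := by
  rw [← LinearMap.finrank_range_add_finrank_ker (f.domRestrict U), LinearMap.range_domRestrict,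
    LinearMap.ker_domRestrict, ← Submodule.finrank_map_subtype_eq, Submodule.map_comap_subtype,
    inf_comm]

theorem finrank_le_finrank_map_mkQ_add_finrank (U N : Submodule K W) [FiniteDimensional K U]
    [FiniteDimensional K N] : finrank K U ≤ finrank K (U.map N.mkQ) + finrank K N := by
  rw [← finrank_map_add_finrank_ker_inf N.mkQ U, N.ker_mkQ]
  exact Nat.add_le_add_left (Submodule.finrank_mono inf_le_left) _

theorem finrank_map_mkQ_le_of_inf_le {U R N : Submodule K W} [FiniteDimensional K U]
    (h : R ⊓ U ≤ N) : finrank K (U.map N.mkQ) ≤ finrank K (U.map R.mkQ) := by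
  have hN := finrank_map_add_finrank_ker_inf N.mkQ U
  have hR := finrank_map_add_finrank_ker_inf R.mkQ U
  rw [Submodule.ker_mkQ] at hN hR
  have hle : finrank K (R ⊓ U : Submodule K W) ≤ finrank K (N ⊓ U : Submodule K W) :=
    have : FiniteDimensional K (N ⊓ U : Submodule K W) := Submodule.finiteDimensional_inf_right N U
    Submodule.finrank_mono (le_inf h inf_le_right)
  omega

theorem exists_finset_linearIndepOn_span_eq (v : α → W) (S : Set α)
    [FiniteDimensional K (Submodule.span K (v '' S))] :
    ∃ B : Finset α, ↑B ⊆ S ∧ LinearIndepOn K v B ∧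
      Submodule.span K (v '' B) = Submodule.span K (v '' S) := by
  obtain ⟨B, hBS, -, hspan, hB⟩ :=
    exists_linearIndepOn_extension (linearIndepOn_empty K v) (Set.empty_subset S)
  have hspan_eq : Submodule.span K (v '' B) = Submodule.span K (v '' S) :=
    le_antisymm (Submodule.span_mono (Set.image_mono hBS)) (Submodule.span_le.2 hspan)
  have hmem : ∀ b : B, v b ∈ Submodule.span K (v '' S) :=
    fun b => Submodule.subset_span ⟨b, hBS b.2, rfl⟩
  have hB' : LinearIndependent K fun b : B => (⟨v b, hmem b⟩ : Submodule.span K (v '' S)) :=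
    LinearIndependent.of_comp (Submodule.span K (v '' S)).subtype hB
  have hfin : B.Finite := hB'.finite
  exact ⟨hfin.toFinset, by rwa [hfin.coe_toFinset], by rwa [hfin.coe_toFinset],
    by rwa [hfin.coe_toFinset]⟩

theorem card_eq_finrank_span_of_linearIndepOn {v : α → W} {B : Finset α}
    (hB : LinearIndepOn K v (B : Set α)) :
    B.card = finrank K (Submodule.span K (v '' B)) := by
  have h := finrank_span_eq_card hB
  rw [← Set.image_eq_range, ← Nat.card_eq_fintype_card, Nat.card_coe_set_eq,
    Set.ncard_coe_finset] at h
  exact h.symm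

/- A maximal independent subset of `v '' S` is counted against the windows `b ∈ I`: each of its
members lies in at least `n` of them, and each window contains at most `q` of its members. -/
theorem finrank_span_mul_le_card_mul (v : α → W) (S : Set α)
    [FiniteDimensional K (Submodule.span K (v '' S))] (r : α → β → Prop)
    [∀ a b, Decidable (r a b)] (I : Finset β) {n q : ℕ}
    (hn : ∀ a ∈ S, n ≤ (I.bipartiteAbove r a).card)
    (hq : ∀ b ∈ I, finrank K (Submodule.span K (v '' {a ∈ S | r a b})) ≤ q) :
    finrank K (Submodule.span K (v '' S)) * n ≤ I.card * q := by
  obtain ⟨B, hBS, hB, hspan⟩ := exists_finset_linearIndepOn_span_eq (K := K) v S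
  rw [← hspan, ← card_eq_finrank_span_of_linearIndepOn hB]
  refine Finset.card_mul_le_card_mul r (fun a ha => hn a (hBS ha)) fun b hb => ?_
  have hB_below : (B.bipartiteBelow r b : Set α) ⊆ B := Finset.filter_subset _ B
  have hsub : (B.bipartiteBelow r b : Set α) ⊆ {a ∈ S | r a b} := fun a ha =>
    ⟨hBS (hB_below ha), ((Finset.mem_bipartiteBelow r).1 ha).2⟩
  have : FiniteDimensional K (Submodule.span K (v '' {a ∈ S | r a b})) :=
    Submodule.finiteDimensional_of_le
      (Submodule.span_mono (Set.image_mono (Set.sep_subset S fun a => r a b)))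
  rw [card_eq_finrank_span_of_linearIndepOn (hB.mono hB_below)]
  exact (Submodule.finrank_mono (Submodule.span_mono (Set.image_mono hsub))).trans (hq b hb)

/- The supports of a finite generating subset of `S` already cover `F`. -/
theorem card_le_finrank_mul_of_support_le {U : Submodule K (α →₀ W)}
    [FiniteDimensional K U] {S : Set (α →₀ W)} (hSU : S ⊆ U) {p : ℕ}
    (hp : ∀ x ∈ S, x.support.card ≤ p) (F : Finset α) (hF : ∀ a ∈ F, ∃ x ∈ S, x a ≠ 0) :
    F.card ≤ finrank K U * p := by
  classical
  have hle : Submodule.span K (id '' S) ≤ U := by rwa [Set.image_id, Submodule.span_le]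
  have := Submodule.finiteDimensional_of_le hle
  obtain ⟨B, hBS, hB, hspan⟩ := exists_finset_linearIndepOn_span_eq (K := K) id S
  have hcover : F ⊆ B.biUnion Finsupp.support := fun a ha => by
    obtain ⟨x, hxS, hxa⟩ := hF a ha
    by_contra hnot
    have hker : Submodule.span K (id '' (B : Set (α →₀ W))) ≤ (Finsupp.lapply a).ker := by
      rw [Set.image_id, Submodule.span_le]
      intro y hy
      by_contra hya
      exact hnot (Finset.mem_biUnion.2 ⟨y, hy, Finsupp.mem_support_iff.2 hya⟩)
    rw [hspan, Set.image_id] at hker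
    exact hxa (hker (Submodule.subset_span hxS))
  calc F.card ≤ B.card * p :=
        (Finset.card_le_card hcover).trans
          (Finset.card_biUnion_le_card_mul _ _ _ fun x hx => hp x (hBS hx))
    _ ≤ finrank K U * p := by
        rw [card_eq_finrank_span_of_linearIndepOn hB, hspan]
        exact Nat.mul_le_mul_right p (Submodule.finrank_mono hle)

end LinearAlgebra

section Finsupp

variable {K V α : Type*} [DivisionRing K] [AddCommGroup V] [Module K V]

theorem finiteDimensional_supported [FiniteDimensional K V] (F : Finset α) :
    FiniteDimensional K (Finsupp.supported V K (F : Set α)) :=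
  Module.Finite.equiv (Finsupp.supportedEquivFinsupp (M := V) (R := K) (F : Set α)).symm

theorem finrank_supported [FiniteDimensional K V] (F : Finset α) :
    finrank K (Finsupp.supported V K (F : Set α)) = F.card * finrank K V := by
  rw [(Finsupp.supportedEquivFinsupp (M := V) (R := K) (F : Set α)).finrank_eq,
    (Finsupp.linearEquivFunOnFinite K V (F : Set α)).finrank_eq, Module.finrank_pi_fintype,
    Finset.sum_const, Finset.card_univ, ← Nat.card_eq_fintype_card,
    Nat.card_coe_set_eq, Set.ncard_coe_finset, smul_eq_mul]

theorem span_image_single_prod_univ (A : Set α) :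
    Submodule.span K ((fun p : α × V => Finsupp.single p.1 p.2) '' A ×ˢ Set.univ) =
      Finsupp.supported V K A := by
  apply le_antisymm
  · rw [Submodule.span_le]
    rintro _ ⟨⟨a, v⟩, ⟨ha, -⟩, rfl⟩
    exact Finsupp.single_mem_supported K v ha
  · intro x hx
    rw [← x.sum_single]
    exact Submodule.sum_mem _ fun a ha =>
      Submodule.subset_span ⟨(a, x a), ⟨hx ha, Set.mem_univ _⟩, rfl⟩

theorem exists_finset_le_supported {U : Submodule K (α →₀ V)} (hU : U.FG) :
    ∃ E : Finset α, U ≤ Finsupp.supported V K (E : Set α) := by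
  classical
  obtain ⟨S, rfl⟩ := hU
  refine ⟨S.biUnion Finsupp.support, ?_⟩
  rw [Finset.coe_biUnion]
  exact Finsupp.span_le_supported_biUnion_support K (S : Set (α →₀ V))

theorem exists_finset_forall_single_mem_supported [FiniteDimensional K V] {β : Type*}
    (f : (β →₀ V) →ₗ[K] (α →₀ V)) (b : β) :
    ∃ E : Finset α, ∀ v, f (Finsupp.single b v) ∈ Finsupp.supported V K (E : Set α) := by
  obtain ⟨E, hE⟩ := exists_finset_le_supported (U := (f ∘ₗ Finsupp.lsingle b).range)
    LinearMap.HasFiniteRange.of_finite_dom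
  exact ⟨E, fun v => hE ⟨v, rfl⟩⟩

end Finsupp

section Shift

variable {K V G : Type*} [DivisionRing K] [AddCommGroup V] [Module K V] [Group G]

variable (K) in
/-- The shift action of `g` on finitely supported configurations, `(g · x)(h) = x(g⁻¹h)`. -/
noncomputable def finsuppShift (g : G) : (G →₀ V) ≃ₗ[K] (G →₀ V) :=
  Finsupp.domLCongr (Equiv.mulLeft g)

theorem finsuppShift_apply (g h : G) (x : G →₀ V) : finsuppShift K g x h = x (g⁻¹ * h) := rfl

theorem finsuppShift_single (g h : G) (v : V) :
    finsuppShift K g (Finsupp.single h v) = Finsupp.single (g * h) v :=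
  Finsupp.domLCongr_single _ _ _

theorem card_support_finsuppShift (g : G) (x : G →₀ V) :
    (finsuppShift K g x).support.card = x.support.card :=
  Finset.card_map _

theorem finsuppShift_mem_supported {A : Set G} {x : G →₀ V} (g : G)
    (hx : x ∈ Finsupp.supported V K A) : finsuppShift K g x ∈ Finsupp.supported V K (g • A) := by
  intro h hh
  rw [Finset.mem_coe, Finsupp.mem_support_iff, finsuppShift_apply] at hh
  exact Set.mem_smul_set_iff_inv_smul_mem.2 (hx (Finsupp.mem_support_iff.2 hh))

/-- Equivariance of a linear map on finitely supported configurations under all shifts. -/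
def ShiftEquivariant (σ : (G →₀ V) →ₗ[K] (G →₀ V)) : Prop :=
  ∀ g x, σ (finsuppShift K g x) = finsuppShift K g (σ x)

end Shift

section FinsuppNuca

variable {k V G : Type*} [Field k] [AddCommGroup V] [Module k V] [Group G]

/-- The restriction of the NUCA `nucaMap M s` to finitely supported configurations, as a linear
map (see `finsuppNuca_apply`). -/
noncomputable def finsuppNuca (M : Finset G) (s : G → G → (V →ₗ[k] V)) :
    (G →₀ V) →ₗ[k] (G →₀ V) :=
  Finsupp.lsum ℕ fun h => ∑ m ∈ M, Finsupp.lsingle (h * m⁻¹) ∘ₗ s (h * m⁻¹) m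

theorem finsuppNuca_single (M : Finset G) (s : G → G → (V →ₗ[k] V)) (h : G) (v : V) :
    finsuppNuca M s (Finsupp.single h v) =
      ∑ m ∈ M, Finsupp.single (h * m⁻¹) (s (h * m⁻¹) m v) := by
  simp [finsuppNuca]

theorem finsuppNuca_apply (M : Finset G) (s : G → G → (V →ₗ[k] V)) (x : G →₀ V) (g : G) :
    finsuppNuca M s x g = nucaMap M s x g := by
  classical
  induction x using Finsupp.induction_linear with
  | zero => simp [nucaMap]
  | add x y hx hy => simp [nucaMap, Finset.sum_add_distrib, hx, hy]
  | single h v =>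
    rw [finsuppNuca_single, Finsupp.finsetSum_apply]
    refine Finset.sum_congr rfl fun m _ => ?_
    by_cases hgm : h = g * m
    · subst hgm
      simp
    · rw [Finsupp.single_eq_of_ne (Ne.symm hgm), map_zero,
        Finsupp.single_eq_of_ne fun hg => hgm (by rw [hg, inv_mul_cancel_right])]

theorem coe_finsuppNuca (M : Finset G) (s : G → G → (V →ₗ[k] V)) (x : G →₀ V) :
    ⇑(finsuppNuca M s x) = nucaMap M s x :=
  funext (finsuppNuca_apply M s x)

theorem shiftEquivariant_finsuppNuca_const (M : Finset G) (c : G → (V →ₗ[k] V)) :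
    ShiftEquivariant (finsuppNuca M fun _ => c) := fun g x => by
  ext h
  simp only [finsuppShift_apply, finsuppNuca_apply, nucaMap, mul_assoc]

theorem PostSurjective.surjective_finsuppNuca {M : Finset G} {s : G → G → (V →ₗ[k] V)}
    (h : PostSurjective (nucaMap M s)) : Surjective (finsuppNuca M s) := fun y => by
  have hzero : nucaMap M s (0 : G → V) = 0 := by
    rw [← Finsupp.coe_zero, ← coe_finsuppNuca, map_zero, Finsupp.coe_zero]
  obtain ⟨z, hz, hzy⟩ := h 0 y (by rw [hzero]; exact y.hasFiniteSupport)
  refine ⟨Finsupp.ofSupportFinite z hz, DFunLike.coe_injective ?_⟩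
  exact (coe_finsuppNuca M s _).trans hzy

theorem finsuppNuca_congr {M : Finset G} {s t : G → G → (V →ₗ[k] V)} {x : G →₀ V}
    (h : ∀ g, s g ≠ t g → ∀ m ∈ M, x (g * m) = 0) : finsuppNuca M s x = finsuppNuca M t x := by
  ext g
  rw [finsuppNuca_apply, finsuppNuca_apply]
  refine Finset.sum_congr rfl fun m hm => ?_
  by_cases hg : s g = t g
  · rw [hg]
  · rw [h g hg m hm, map_zero, map_zero]

theorem hasFiniteRange_finsuppNuca_sub [FiniteDimensional k V] (M : Finset G)
    {s t : G → G → (V →ₗ[k] V)} (hst : Asymptotic s t) :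
    (finsuppNuca M s - finsuppNuca M t).HasFiniteRange := by
  have hst : {g | s g ≠ t g}.Finite := hst
  have := finiteDimensional_supported (K := k) (V := V) hst.toFinset
  have hle : (finsuppNuca M s - finsuppNuca M t).range ≤
      Finsupp.supported V k (hst.toFinset : Set G) := by
    rintro _ ⟨x, rfl⟩ g hg
    rw [hst.coe_toFinset]
    intro hgst
    refine Finsupp.mem_support_iff.1 hg ?_
    simp only [LinearMap.sub_apply, Finsupp.sub_apply, finsuppNuca_apply, nucaMap, hgst, sub_self]
  have := Submodule.finiteDimensional_of_le hle
  exact Module.Finite.iff_fg.1 this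

theorem nucaMap_nucaMap_eq_self {P Q : Finset G} {p q : G → G → (V →ₗ[k] V)}
    (h : ∀ x : G →₀ V, finsuppNuca P p (finsuppNuca Q q x) = x) (x : G → V) :
    nucaMap P p (nucaMap Q q x) = x := by
  classical
  ext g
  -- Both sides at `g` only depend on `x` on the finite set `A`.
  let A : Finset G := insert g ({g} * P * Q)
  let y : G →₀ V := Finsupp.indicator A fun a _ => x a
  have hy : ∀ a ∈ A, y a = x a := fun a ha => Finsupp.indicator_of_mem ha _
  have hyg := DFunLike.congr_fun (h y) g
  rw [finsuppNuca_apply, coe_finsuppNuca, hy g (Finset.mem_insert_self g _)] at hyg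
  rw [← hyg]
  refine Finset.sum_congr rfl fun a ha => congrArg _ (Finset.sum_congr rfl fun b hb => ?_)
  rw [hy]
  exact Finset.mem_insert_of_mem
    (Finset.mul_mem_mul (Finset.mul_mem_mul (Finset.mem_singleton_self g) ha) hb)

theorem exists_finsuppNuca_eq (f : (G →₀ V) →ₗ[k] (G →₀ V)) (N : Finset G)
    (hN : ∀ h v g, f (Finsupp.single h v) g ≠ 0 → g⁻¹ * h ∈ N) :
    ∃ t : G → G → (V →ₗ[k] V), finsuppNuca N t = f := by
  classical
  refine ⟨fun g m => Finsupp.lapply g ∘ₗ f ∘ₗ Finsupp.lsingle (g * m), ?_⟩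
  ext h v g
  simp only [LinearMap.comp_apply, Finsupp.lsingle_apply, finsuppNuca_apply, nucaMap,
    Finsupp.lapply_apply]
  by_cases hh : g⁻¹ * h ∈ N
  · rw [Finset.sum_eq_single_of_mem _ hh fun m _ hm => ?_, mul_inv_cancel_left,
      Finsupp.single_eq_same]
    rw [Finsupp.single_eq_of_ne, Finsupp.single_zero, map_zero, Finsupp.zero_apply]
    rintro rfl
    exact hm (inv_mul_cancel_left g m).symm
  · rw [Finset.sum_eq_zero fun m hm => ?_]
    · by_contra hne
      exact hh (hN h v g (Ne.symm hne))
    · rw [Finsupp.single_eq_of_ne, Finsupp.single_zero, map_zero, Finsupp.zero_apply]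
      rintro rfl
      exact hh ((inv_mul_cancel_left g m).symm ▸ hm)

theorem isInvertibleNuca_of_propagation [FiniteDimensional k V] {M : Finset G}
    {s : G → G → (V →ₗ[k] V)} (hs : Bijective (finsuppNuca M s)) (B N : Finset G)
    (hN : ∀ h ∉ B, ∀ v, ∃ x, finsuppNuca M s x = Finsupp.single h v ∧
      ∀ g, x g ≠ 0 → g⁻¹ * h ∈ N) :
    IsInvertibleNuca k (nucaMap M s) := by
  classical
  let e := LinearEquiv.ofBijective (finsuppNuca M s) hs
  choose E hE using exists_finset_forall_single_mem_supported e.symm.toLinearMap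
  obtain ⟨t, ht⟩ := exists_finsuppNuca_eq e.symm.toLinearMap
      (N ∪ B.biUnion fun h => (E h).image fun g => g⁻¹ * h) fun h v g hg => by
    by_cases hh : h ∈ B
    · exact Finset.mem_union_right _ (Finset.mem_biUnion.2
        ⟨h, hh, Finset.mem_image_of_mem _ (hE h v (Finsupp.mem_support_iff.2 hg))⟩)
    · obtain ⟨x, hx, hxN⟩ := hN h hh v
      have hex : e.symm (Finsupp.single h v) = x := e.symm_apply_eq.2 hx.symm
      exact Finset.mem_union_left _ (hxN g (hex ▸ hg))
  exact ⟨_, t, nucaMap_nucaMap_eq_self fun x => by rw [ht]; exact e.symm_apply_apply x,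
    nucaMap_nucaMap_eq_self fun x => by rw [ht]; exact e.apply_symm_apply x⟩

theorem isInvertibleNuca_of_finite [Finite G] [FiniteDimensional k V] {M : Finset G}
    {s : G → G → (V →ₗ[k] V)} (hs : Surjective (finsuppNuca M s)) :
    IsInvertibleNuca k (nucaMap M s) := by
  have := Fintype.ofFinite G
  exact isInvertibleNuca_of_propagation ⟨LinearMap.injective_iff_surjective.2 hs, hs⟩
    Finset.univ ∅ fun h hh => absurd (Finset.mem_univ h) hh

/- Far from the finite set where `s` differs from `c`, the preimage of `single h v` under `σ_s` is
the shift by `h` of the preimage of `single 1 v` under `σ_c`. -/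
theorem isInvertibleNuca_of_asymptotic_const [FiniteDimensional k V] {M : Finset G}
    {s : G → G → (V →ₗ[k] V)} {c : G → (V →ₗ[k] V)} (hsc : Asymptotic s fun _ => c)
    (hs : Surjective (finsuppNuca M s)) (hc : Injective (finsuppNuca M fun _ => c)) :
    IsInvertibleNuca k (nucaMap M s) := by
  classical
  have hfin : {g | s g ≠ c}.Finite := hsc
  obtain ⟨hs_bij, hc_bij⟩ :=
    bijective_and_bijective_of_hasFiniteRange_sub hs hc (hasFiniteRange_finsuppNuca_sub M hsc)
  let e := LinearEquiv.ofBijective (finsuppNuca M fun _ => c) hc_bij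
  have he : ∀ y, finsuppNuca M (fun _ => c) (e.symm y) = y := e.apply_symm_apply
  obtain ⟨E, hE⟩ := exists_finset_forall_single_mem_supported e.symm.toLinearMap 1
  refine isInvertibleNuca_of_propagation hs_bij (hfin.toFinset * M * E⁻¹) E⁻¹ fun h hh v =>
    ⟨finsuppShift k h (e.symm (Finsupp.single 1 v)), ?_, fun g hg => ?_⟩
  · have hc_eq : finsuppNuca M (fun _ => c) (finsuppShift k h (e.symm (Finsupp.single 1 v))) =
        Finsupp.single h v := by
      rw [shiftEquivariant_finsuppNuca_const M c h, he, finsuppShift_single, mul_one]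
    rw [← hc_eq]
    refine finsuppNuca_congr fun g hg m hm => ?_
    rw [finsuppShift_apply]
    by_contra hne
    refine hh (Finset.mem_mul.2 ⟨g * m, Finset.mul_mem_mul (hfin.mem_toFinset.2 hg) hm,
      (h⁻¹ * (g * m))⁻¹, Finset.inv_mem_inv (hE v (Finsupp.mem_support_iff.2 hne)), by group⟩)
  · rw [← inv_inv (g⁻¹ * h), mul_inv_rev, inv_inv]
    exact Finset.inv_mem_inv (hE v (Finsupp.mem_support_iff.2 hg))

end FinsuppNuca

section EquivariantMaps

variable {K V G : Type*} [DivisionRing K] [AddCommGroup V] [Module K V] [Group G]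

theorem ShiftEquivariant.exists_range_inf_supported_le_map {σ : (G →₀ V) →ₗ[K] (G →₀ V)}
    (hσ : ShiftEquivariant σ) [FiniteDimensional K V] (A : Finset G) :
    ∃ E : Finset G, ∀ g : G, σ.range ⊓ Finsupp.supported V K (g • (A : Set G)) ≤
      (Finsupp.supported V K (g • (E : Set G))).map σ := by
  have := finiteDimensional_supported (K := K) (V := V) A
  have hfg : (σ.range ⊓ Finsupp.supported V K (A : Set G) : Submodule K (G →₀ V)).FG :=
    Module.Finite.iff_fg.1 (Submodule.finiteDimensional_inf_right _ _)
  obtain ⟨P, hP, hPσ⟩ := exists_fg_map_eq_of_le_range hfg inf_le_left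
  obtain ⟨E, hE⟩ := exists_finset_le_supported hP
  refine ⟨E, fun g => ?_⟩
  rintro _ ⟨⟨x, rfl⟩, hx⟩
  have hxA : finsuppShift K g⁻¹ (σ x) ∈ Finsupp.supported V K (A : Set G) := by
    simpa only [inv_smul_smul] using finsuppShift_mem_supported g⁻¹ hx
  have hxP : finsuppShift K g⁻¹ (σ x) ∈ P.map σ := by
    rw [hPσ]
    exact ⟨⟨_, hσ g⁻¹ x⟩, hxA⟩
  obtain ⟨y, hyP, hy⟩ := hxP
  refine ⟨finsuppShift K g y, finsuppShift_mem_supported g (hE hyP), ?_⟩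
  rw [hσ, hy]
  ext h
  simp only [finsuppShift_apply, inv_inv, mul_inv_cancel_left]

theorem card_le_finrank_mul_card_support {U : Submodule K (G →₀ V)} [FiniteDimensional K U]
    {z : G →₀ V} (hz : z ≠ 0) (F : Finset G) (hU : ∀ g ∈ F, finsuppShift K g z ∈ U) :
    F.card ≤ finrank K U * z.support.card := by
  classical
  obtain ⟨a, ha⟩ := Finsupp.ne_iff.1 hz
  rw [← Finset.card_image_of_injective F (mul_left_injective a)]
  refine card_le_finrank_mul_of_support_le (S := (fun g => finsuppShift K g z) '' F)
    (by rintro _ ⟨g, hg, rfl⟩; exact hU g hg)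
    (by rintro _ ⟨g, -, rfl⟩; exact (card_support_finsuppShift g z).le) _ fun b hb => ?_
  obtain ⟨g, hg, rfl⟩ := Finset.mem_image.1 hb
  refine ⟨_, ⟨g, hg, rfl⟩, ?_⟩
  rwa [finsuppShift_apply, inv_mul_cancel_left]

end EquivariantMaps

section Amenable

variable {K V G : Type*} [DivisionRing K] [AddCommGroup V] [Module K V] [Group G]
  [DecidableEq G]

theorem finrank_map_supported_mul_card_le [FiniteDimensional K V] {W : Type*} [AddCommGroup W]
    [Module K W] (f : (G →₀ V) →ₗ[K] W) (A F : Finset G) {q : ℕ}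
    (hq : ∀ b ∈ F * A⁻¹,
      finrank K ((Finsupp.supported V K ((F ∩ b • A : Finset G) : Set G)).map f) ≤ q) :
    finrank K ((Finsupp.supported V K (F : Set G)).map f) * A.card ≤ (F * A⁻¹).card * q := by
  have := fun B : Finset G => finiteDimensional_supported (K := K) (V := V) B
  let v : G × V → W := fun p => f (Finsupp.single p.1 p.2)
  have hspan : ∀ B : Finset G, Submodule.span K (v '' (B : Set G) ×ˢ Set.univ) =
      (Finsupp.supported V K (B : Set G)).map f := fun B => by
    rw [← span_image_single_prod_univ, Submodule.map_span, Set.image_image]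
  have : FiniteDimensional K (Submodule.span K (v '' (F : Set G) ×ˢ Set.univ)) := by
    rw [hspan]
    infer_instance
  rw [← hspan]
  refine finrank_span_mul_le_card_mul v _ (fun p b => p.1 ∈ b • A) _ ?_ fun b hb => ?_
  · rintro ⟨g, w⟩ ⟨hg, -⟩
    rw [← Finset.card_inv A, ← Finset.card_smul_finset g A⁻¹]
    refine Finset.card_le_card fun b hb => ?_
    obtain ⟨a, ha, rfl⟩ := Finset.mem_smul_finset.1 hb
    refine (Finset.mem_bipartiteAbove _).2 ⟨Finset.mul_mem_mul hg ha, ?_⟩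
    rw [Finset.mem_smul_finset]
    exact ⟨a⁻¹, Finset.mem_inv'.1 ha, mul_inv_cancel_right g a⟩
  · have hset : {p ∈ (F : Set G) ×ˢ (Set.univ : Set V) | p.1 ∈ b • A} =
        ((F ∩ b • A : Finset G) : Set G) ×ˢ Set.univ := by
      ext p
      simp only [Set.mem_prod, Set.mem_univ, and_true, Finset.mem_coe, Finset.mem_inter,
        Set.mem_ofPred_eq]
    rw [hset, hspan]
    exact hq b hb

theorem ShiftEquivariant.exists_card_mul_finrank_supported_le {σ : (G →₀ V) →ₗ[K] (G →₀ V)}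
    (hσ : ShiftEquivariant σ) [FiniteDimensional K V]
    [FiniteDimensional K ((G →₀ V) ⧸ σ.range)] (A : Finset G) :
    ∃ E : Finset G, ∀ F Y : Finset G, F * E ⊆ Y →
      A.card * (F.card * finrank K V) ≤
        A.card * finrank K ((Finsupp.supported V K (Y : Set G)).map σ) +
          Y.card * finrank K ((G →₀ V) ⧸ σ.range) := by
  obtain ⟨E, hE⟩ := hσ.exists_range_inf_supported_le_map A
  refine ⟨A⁻¹ * insert 1 E, fun F Y hFY => ?_⟩
  rw [← mul_assoc, Finset.mul_subset_iff] at hFY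
  have hFA : F * A⁻¹ ⊆ Y := fun b hb => by
    simpa only [mul_one] using hFY b hb 1 (Finset.mem_insert_self 1 E)
  have := fun B : Finset G => finiteDimensional_supported (K := K) (V := V) B
  set N := (Finsupp.supported V K (Y : Set G)).map σ
  have hlocal : ∀ b ∈ F * A⁻¹,
      σ.range ⊓ Finsupp.supported V K ((F ∩ b • A : Finset G) : Set G) ≤ N := fun b hb => by
    have hbA : ((F ∩ b • A : Finset G) : Set G) ⊆ b • (A : Set G) := by
      rw [← Finset.coe_smul_finset]
      exact Finset.coe_subset.2 Finset.inter_subset_right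
    have hbE : b • (E : Set G) ⊆ Y := by
      rintro _ ⟨e, he, rfl⟩
      exact hFY b hb e (Finset.mem_insert_of_mem he)
    exact (inf_le_inf_left _ (Finsupp.supported_mono hbA)).trans
      ((hE b).trans (Submodule.map_mono (Finsupp.supported_mono hbE)))
  have hcover := finrank_map_supported_mul_card_le N.mkQ A F fun b hb =>
    (finrank_map_mkQ_le_of_inf_le (hlocal b hb)).trans (Submodule.finrank_le _)
  have hF := finrank_le_finrank_map_mkQ_add_finrank (Finsupp.supported V K (F : Set G)) N
  rw [finrank_supported] at hF
  calc A.card * (F.card * finrank K V)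
      ≤ A.card * (finrank K ((Finsupp.supported V K (F : Set G)).map N.mkQ) + finrank K N) :=
        Nat.mul_le_mul_left _ hF
    _ = A.card * finrank K N +
          finrank K ((Finsupp.supported V K (F : Set G)).map N.mkQ) * A.card := by ring
    _ ≤ A.card * finrank K N + Y.card * finrank K ((G →₀ V) ⧸ σ.range) :=
        Nat.add_le_add_left (hcover.trans (Nat.mul_le_mul_right _ (Finset.card_le_card hFA))) _

variable (G) in
/-- The Følner condition: `G` has finite subsets almost invariant under left translation by any
prescribed finite set of elements, i.e. `G` is amenable. -/
def FolnerCondition : Prop :=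
  ∀ (K : Finset G) (ε : ℝ), 0 < ε →
    ∃ F : Finset G, F.Nonempty ∧ ∀ g ∈ K, (((g • F) ∆ F).card : ℝ) ≤ ε * (F.card : ℝ)

theorem mul_subset_union_biUnion_smul_symmDiff (E F : Finset G) :
    E * F ⊆ F ∪ E.biUnion fun g => (g • F) ∆ F := by
  refine Finset.mul_subset_iff.2 fun e he f hf => ?_
  by_cases h : e * f ∈ F
  · exact Finset.mem_union_left _ h
  · exact Finset.mem_union_right _ (Finset.mem_biUnion.2
      ⟨e, he, Finset.mem_symmDiff.2 (Or.inl ⟨Finset.smul_mem_smul_finset hf, h⟩)⟩)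

theorem FolnerCondition.exists_mul_card_mul_le (hG : FolnerCondition G) (E : Finset G) (n : ℕ) :
    ∃ F : Finset G, F.Nonempty ∧ n * (F * E).card ≤ (n + 1) * F.card := by
  obtain ⟨F, hF, hFE⟩ := hG E⁻¹ (1 / (n * E.card + 1)) (by positivity)
  have hcard : ((E⁻¹ * F).card : ℝ) ≤ F.card + E.card * (1 / (n * E.card + 1) * F.card) := calc
    ((E⁻¹ * F).card : ℝ) ≤ F.card + ∑ g ∈ E⁻¹, (((g • F) ∆ F).card : ℝ) := by
      exact_mod_cast (Finset.card_le_card (mul_subset_union_biUnion_smul_symmDiff E⁻¹ F)).trans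
        ((Finset.card_union_le _ _).trans (Nat.add_le_add_left Finset.card_biUnion_le _))
    _ ≤ F.card + E.card * (1 / (n * E.card + 1) * F.card) := by
      rw [← Finset.card_inv E, ← nsmul_eq_mul E⁻¹.card]
      exact add_le_add_right (Finset.sum_le_card_nsmul _ _ _ (by simpa using hFE)) _
  have hratio : (n : ℝ) * (E.card * (1 / (n * E.card + 1) * F.card)) ≤ F.card := by
    have hle : (n * E.card : ℝ) / (n * E.card + 1) ≤ 1 :=
      div_le_one_of_le₀ (by linarith) (by positivity)
    calc (n : ℝ) * (E.card * (1 / (n * E.card + 1) * F.card))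
        = n * E.card / (n * E.card + 1) * F.card := by ring
      _ ≤ F.card := mul_le_of_le_one_left (Nat.cast_nonneg _) hle
  refine ⟨F⁻¹, hF.inv, ?_⟩
  rw [← Finset.card_inv (F⁻¹ * E), mul_inv_rev, inv_inv, Finset.card_inv]
  have hreal : (n : ℝ) * (E⁻¹ * F).card ≤ (n + 1) * F.card := by
    linarith [mul_le_mul_of_nonneg_left hcard (Nat.cast_nonneg (α := ℝ) n)]
  exact_mod_cast hreal

theorem ShiftEquivariant.card_le_finrank_ker_inf_supported_mul {σ : (G →₀ V) →ₗ[K] (G →₀ V)}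
    (hσ : ShiftEquivariant σ) [FiniteDimensional K V] {z : G →₀ V} (hz0 : z ≠ 0) (hz : σ z = 0)
    {F Y : Finset G} (hFY : F * z.support ⊆ Y) :
    F.card ≤ finrank K (σ.ker ⊓ Finsupp.supported V K (Y : Set G) : Submodule K (G →₀ V)) *
      z.support.card := by
  have := finiteDimensional_supported (K := K) (V := V) Y
  have := Submodule.finiteDimensional_inf_right σ.ker (Finsupp.supported V K (Y : Set G))
  refine card_le_finrank_mul_card_support hz0 F fun g hg => ⟨?_, fun h hh => ?_⟩
  · rw [SetLike.mem_coe, LinearMap.mem_ker, hσ, hz, map_zero]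
  · obtain ⟨a, ha, rfl⟩ := finsuppShift_mem_supported (K := K) g (Finset.Subset.refl z.support) hh
    exact hFY (Finset.mul_mem_mul hg ha)

/- If `σ z = 0` with `z ≠ 0`, then `ker σ ∩ V^Y` has dimension at least `|F| / |supp z|` as soon as
`Y ⊇ F * supp z`, but along a Følner sequence its dimension is `o(|F|)`. -/
theorem ShiftEquivariant.injective_of_folnerCondition [Infinite G] (hG : FolnerCondition G)
    {σ : (G →₀ V) →ₗ[K] (G →₀ V)} (hσ : ShiftEquivariant σ) [FiniteDimensional K V]
    [FiniteDimensional K ((G →₀ V) ⧸ σ.range)] : Injective σ := by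
  rw [← LinearMap.ker_eq_bot, LinearMap.ker_eq_bot']
  intro z hz
  by_contra hz0
  set d := finrank K V
  set q := finrank K ((G →₀ V) ⧸ σ.range)
  set p := z.support.card
  set n := p * (d + 2 * q) + 1
  obtain ⟨A, hA⟩ := Infinite.exists_subset_card_eq G n
  obtain ⟨E, hE⟩ := hσ.exists_card_mul_finrank_supported_le A
  obtain ⟨F, hF, hFY⟩ := hG.exists_mul_card_mul_le (E ∪ z.support) n
  set Y := F * (E ∪ z.support)
  have := finiteDimensional_supported (K := K) (V := V) Y
  set κ := finrank K (σ.ker ⊓ Finsupp.supported V K (Y : Set G) : Submodule K (G →₀ V))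
  have hFκ : F.card ≤ κ * p := hσ.card_le_finrank_ker_inf_supported_mul hz0 hz
    (Finset.mul_subset_mul_left Finset.subset_union_right)
  have hrank := finrank_map_add_finrank_ker_inf σ (Finsupp.supported V K (Y : Set G))
  have hcount := hE F Y (Finset.mul_subset_mul_left Finset.subset_union_left)
  rw [finrank_supported] at hrank
  rw [hA] at hcount
  have hY : Y.card ≤ 2 * F.card := by
    have hn_pos : 0 < n := Nat.succ_pos _
    refine Nat.le_of_mul_le_mul_left (hFY.trans ?_) hn_pos
    rw [← mul_assoc]
    exact Nat.mul_le_mul_right F.card (by omega)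
  have hκ : n * κ ≤ F.card * (d + 2 * q) := by
    have hd := Nat.mul_le_mul_right d hFY
    have hq := Nat.mul_le_mul_right q hY
    have hnκ := congrArg (n * ·) hrank
    simp only [mul_add] at hnκ
    linarith
  have hcontra : F.card * n ≤ F.card * (p * (d + 2 * q)) := calc
    F.card * n ≤ κ * p * n := Nat.mul_le_mul_right n hFκ
    _ = n * κ * p := by ring
    _ ≤ F.card * (d + 2 * q) * p := Nat.mul_le_mul_right p hκ
    _ = F.card * (p * (d + 2 * q)) := by ring
  exact (Nat.lt_succ_self _).not_ge (Nat.le_of_mul_le_mul_left hcontra hF.card_pos)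

end Amenable

section ResiduallyFinite

variable {K V G H : Type*} [DivisionRing K] [AddCommGroup V] [Module K V] [Group G] [Group H]

theorem exists_normal_finiteIndex_injOn [Group.ResiduallyFinite G] (T : Finset G) :
    ∃ N : Subgroup G, N.Normal ∧ N.FiniteIndex ∧
      Set.InjOn (QuotientGroup.mk : G → G ⧸ N) T := by
  classical
  choose P hP using fun x : T.offDiag =>
    Group.exists_finiteIndexNormalSubgroup_of_residuallyFinite x.1.1 x.1.2
      (Finset.mem_offDiag.1 x.2).2.2
  refine ⟨⨅ x, (P x).toSubgroup, Subgroup.normal_iInf_normal fun x => inferInstance,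
    Subgroup.finiteIndex_iInf fun x => inferInstance, fun g hg h hh hgh => ?_⟩
  by_contra hne
  refine hP ⟨(g, h), Finset.mem_offDiag.2 ⟨hg, hh, hne⟩⟩ (QuotientGroup.eq.2 ?_)
  exact Subgroup.mem_iInf.1 (QuotientGroup.eq.1 hgh) _

theorem mapDomain_finsuppShift (φ : G →* H) (g : G) (x : G →₀ V) :
    Finsupp.mapDomain φ (finsuppShift K g x) = finsuppShift K (φ g) (Finsupp.mapDomain φ x) := by
  induction x using Finsupp.induction_linear with
  | zero => simp only [map_zero, Finsupp.mapDomain_zero]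
  | add x y hx hy => simp only [map_add, Finsupp.mapDomain_add, hx, hy]
  | single h v => simp only [finsuppShift_single, Finsupp.mapDomain_single, map_mul]

/-- The linear map on configurations over `H` induced by a shift equivariant map `σ` over `G` along
a homomorphism `φ : G →* H`: it extends `single 1 v ↦ φ_* (σ (single 1 v))` equivariantly
(see `ShiftEquivariant.pushforward_mapDomain`). -/
noncomputable def pushforward (φ : G →* H) (σ : (G →₀ V) →ₗ[K] (G →₀ V)) :
    (H →₀ V) →ₗ[K] (H →₀ V) :=
  Finsupp.lsum ℕ fun h =>
    (finsuppShift K h).toLinearMap ∘ₗ Finsupp.lmapDomain V K φ ∘ₗ σ ∘ₗ Finsupp.lsingle 1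

theorem ShiftEquivariant.pushforward_mapDomain {σ : (G →₀ V) →ₗ[K] (G →₀ V)}
    (hσ : ShiftEquivariant σ) (φ : G →* H) (x : G →₀ V) :
    pushforward φ σ (Finsupp.mapDomain φ x) = Finsupp.mapDomain φ (σ x) := by
  induction x using Finsupp.induction_linear with
  | zero => simp only [map_zero, Finsupp.mapDomain_zero]
  | add x y hx hy => simp only [map_add, Finsupp.mapDomain_add, hx, hy]
  | single g v =>
    have hg : Finsupp.single g v = finsuppShift K g (Finsupp.single 1 v) := by
      rw [finsuppShift_single, mul_one]
    rw [Finsupp.mapDomain_single, hg, hσ, mapDomain_finsuppShift]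
    simp [pushforward]

theorem ShiftEquivariant.finrank_ker_pushforward_le [Finite H] [FiniteDimensional K V]
    {σ : (G →₀ V) →ₗ[K] (G →₀ V)} (hσ : ShiftEquivariant σ) {φ : G →* H} (hφ : Surjective φ)
    [FiniteDimensional K ((G →₀ V) ⧸ σ.range)] :
    finrank K (pushforward φ σ).ker ≤ finrank K ((G →₀ V) ⧸ σ.range) := by
  set τ := pushforward φ σ
  have hle : σ.range ≤ τ.range.comap (Finsupp.lmapDomain V K φ) := by
    rintro _ ⟨x, rfl⟩
    exact ⟨_, hσ.pushforward_mapDomain φ x⟩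
  have hrange : (Finsupp.lmapDomain V K φ).range = ⊤ :=
    LinearMap.range_eq_top.2 (Finsupp.mapDomain_surjective hφ)
  have hsurj : Surjective (σ.range.mapQ τ.range (Finsupp.lmapDomain V K φ) hle) := by
    rw [← LinearMap.range_eq_top, Submodule.range_mapQ, hrange, Submodule.map_top,
      Submodule.range_mkQ]
  have hcoker := LinearMap.finrank_le_finrank_of_surjective hsurj
  have hker := τ.finrank_range_add_finrank_ker
  have hquot := τ.range.finrank_quotient_add_finrank
  omega

/- A nonzero `z ∈ ker σ` survives in a large finite quotient of `G`, where the kernel of the pushed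
forward map contains all its translates although its dimension is at most that of the cokernel of
`σ`. -/
theorem ShiftEquivariant.injective_of_residuallyFinite [Infinite G] [Group.ResiduallyFinite G]
    {σ : (G →₀ V) →ₗ[K] (G →₀ V)} (hσ : ShiftEquivariant σ) [FiniteDimensional K V]
    [FiniteDimensional K ((G →₀ V) ⧸ σ.range)] : Injective σ := by
  classical
  rw [← LinearMap.ker_eq_bot, LinearMap.ker_eq_bot']
  intro z hz
  by_contra hz0
  set q := finrank K ((G →₀ V) ⧸ σ.range)
  obtain ⟨T, hT⟩ := Infinite.exists_subset_card_eq G (q * z.support.card + 1)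
  obtain ⟨N, _, _, hN⟩ := exists_normal_finiteIndex_injOn (z.support ∪ T)
  let φ := QuotientGroup.mk' N
  have : Fintype (G ⧸ N) := Fintype.ofFinite _
  have hφz : Finsupp.mapDomain φ z ≠ 0 := fun h => hz0 <|
    Finsupp.mapDomain_injOn _ hN (Finset.coe_subset.2 Finset.subset_union_left)
      (by simp) (h.trans Finsupp.mapDomain_zero.symm)
  have hker : ∀ h ∈ Finset.univ,
      finsuppShift K h (Finsupp.mapDomain φ z) ∈ (pushforward φ σ).ker := fun h _ => by
    obtain ⟨g, rfl⟩ := QuotientGroup.mk'_surjective N h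
    rw [← mapDomain_finsuppShift, LinearMap.mem_ker, hσ.pushforward_mapDomain, hσ, hz, map_zero,
      Finsupp.mapDomain_zero]
  have hsupp : (Finsupp.mapDomain φ z).support.card ≤ z.support.card :=
    (Finset.card_le_card Finsupp.mapDomain_support).trans Finset.card_image_le
  have hle : T.card ≤ q * z.support.card := calc
    T.card = (T.image φ).card :=
      (Finset.card_image_of_injOn
        (hN.mono (Finset.coe_subset.2 Finset.subset_union_right))).symm
    _ ≤ (Finset.univ : Finset (G ⧸ N)).card := Finset.card_le_univ _
    _ ≤ finrank K (pushforward φ σ).ker * (Finsupp.mapDomain φ z).support.card :=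
      card_le_finrank_mul_card_support hφz Finset.univ hker
    _ ≤ q * z.support.card :=
      Nat.mul_le_mul (hσ.finrank_ker_pushforward_le (QuotientGroup.mk'_surjective N)) hsupp
  omega

end ResiduallyFinite

theorem self_mem_orbitClosure {G E : Type*} [Group G] (s : G → G → E) : s ∈ orbitClosure s :=
  @subset_closure _ (@Pi.topologicalSpace G (fun _ => G → E) fun _ => ⊥) _ _
    ⟨1, by simp only [inv_one, one_mul]⟩

theorem stmt17_general {k V G : Type*} [Field k] [AddCommGroup V] [Module k V]
    [FiniteDimensional k V] [Group G] [DecidableEq G] (M : Finset G) (s : G → G → (V →ₗ[k] V))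
    (hconst : ∃ c : G → (V →ₗ[k] V), Asymptotic s fun _ => c)
    (hG : FolnerCondition G ∨ Group.ResiduallyFinite G) (hs : PostSurjective (nucaMap M s)) :
    IsInvertibleNuca k (nucaMap M s) := by
  have hsurj := hs.surjective_finsuppNuca
  rcases finite_or_infinite G with hfin | hinf
  · exact isInvertibleNuca_of_finite hsurj
  obtain ⟨c, hsc⟩ := hconst
  have hc := shiftEquivariant_finsuppNuca_const M c
  have := finite_quotient_range_of_hasFiniteRange_sub hsurj (hasFiniteRange_finsuppNuca_sub M hsc)
  refine isInvertibleNuca_of_asymptotic_const hsc hsurj ?_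
  rcases hG with hG | hG
  · exact hc.injective_of_folnerCondition hG
  · exact hc.injective_of_residuallyFinite

/-- Dual surjunctivity: over a finite vector space alphabet, if `s` is asymptotic to
a constant configuration of local defining maps, then `σ_s` is invertible as soon as
(i) `G` is amenable (Følner condition) and `σ_s` is post-surjective, and also as
soon as (ii) `G` is residually finite and `σ_s` is stably post-surjective. -/
theorem stmt17 {k V G : Type*} [Field k] [Finite k] [AddCommGroup V] [Module k V]
    [FiniteDimensional k V] [Group G] [Countable G] [DecidableEq G]
    (M : Finset G) (s : G → G → (V →ₗ[k] V)) (hs : ∀ g, ∀ m ∉ M, s g m = 0)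
    (hconst : ∃ s₀ : G → (V →ₗ[k] V), Set.Finite {g : G | s g ≠ s₀}) :
    ((∀ (K : Finset G) (ε : ℝ), 0 < ε →
        ∃ F : Finset G, F.Nonempty ∧
          ∀ g ∈ K, (((g • F) ∆ F).card : ℝ) ≤ ε * (F.card : ℝ)) →
      PostSurjective (nucaMap M s) →
      IsInvertibleNuca k (nucaMap M s)) ∧
    ((∀ g : G, g ≠ 1 → ∃ N : Subgroup G, N.Normal ∧ N.FiniteIndex ∧ g ∉ N) →
      (∀ p ∈ orbitClosure s, PostSurjective (nucaMap M p)) →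
      IsInvertibleNuca k (nucaMap M s)) := by
  refine ⟨fun hG hs' => stmt17_general M s hconst (Or.inl hG) hs', fun hG hs' => ?_⟩
  have hG' : Group.ResiduallyFinite G := Group.residuallyFinite_iff_exists_finiteIndex.2
    fun g hg => (hG g hg).imp fun N hN => hN.2
  exact stmt17_general M s hconst (Or.inr hG') (hs' s (self_mem_orbitClosure s))
end
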